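/- Let P₀ be the probability measure on S^{T+1} given by P₀({r}) = π_{r_0} ∏_{t=1}^{T} p_{r_{t−1} r_t}, and write H_t(r) = (n_t(r), r_t). Then for every 0 ≤ t < T, every i, j ∈ S and every pair of counter vectors n, n′ ∈ (ℕ₊)^k: P₀(H_{t+1} = (n′, j) and H_t = (n, i)) = p_{ij} · P₀(H_t = (n, i)) if either [i ∈ S_AR^c and n′ = n + 1] or [i ∈ S_AR and n′ = n^{(−i)} + 1], and P₀(H_{t+1} = (n′, j) and H_t = (n, i)) = 0 otherwise. (These are the transition probabilities of the augmented hidden Markov chain {H_t}.) -/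

import Mathlib

open Finset

namespace MRS

/-- Time since the last visit to the regime with value `j` strictly before time `t`;
equals `t + 1` if that regime was never visited before time `t`. -/
def counter {M : ℕ} (r : ℕ → Fin M) (t : ℕ) (j : ℕ) : ℕ :=
  if h : ((Finset.range t).filter fun τ => (r τ : ℕ) = j).Nonempty then
    t - ((Finset.range t).filter fun τ => (r τ : ℕ) = j).max' h
  else t + 1

/-- Counter vector for the `k` AR(1) regimes (the regimes with values `0, …, k-1`). -/
def nvec {M : ℕ} (k : ℕ) (r : ℕ → Fin M) (t : ℕ) : Fin k → ℕ :=
  fun j => counter r t (j : ℕ)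

/-- Extend a finite path to a stream (values beyond the end repeat the last value;
they are never used for counters up to time `t`). -/
def pad {M t : ℕ} (r : Fin (t + 1) → Fin M) : ℕ → Fin M :=
  fun s => r ⟨min s t, Nat.lt_succ_of_le (min_le_right s t)⟩

/-- The set `S^(t)` of possible counter vectors at time `t`: every entry lies in
`{1, …, t+1}`, at most `min t k` entries differ from `t+1`, and the entries different
from `t+1` are pairwise distinct. -/
def Sset (k t : ℕ) : Finset (Fin k → ℕ) :=
  (Fintype.piFinset fun _ : Fin k => Finset.Icc 1 (t + 1)).filter fun n =>
    (Finset.univ.filter fun j => n j ≠ t + 1).card ≤ min t k ∧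
      ∀ i j : Fin k, i ≠ j → n i ≠ t + 1 → n j ≠ t + 1 → n i ≠ n j

end MRS

namespace MRS

/-- The (prior) probability of a regime path: `P₀({r}) = π_{r_0} ∏_{t=1}^T p_{r_{t-1} r_t}`. -/
noncomputable def w0 {M : ℕ} (pi0 : Fin M → ℝ) (p : Fin M → Fin M → ℝ) {T : ℕ}
    (r : Fin (T + 1) → Fin M) : ℝ :=
  pi0 (r 0) * ∏ t ∈ Finset.Icc 1 T, p (pad r (t - 1)) (pad r t)

end MRS

namespace MRS

lemma counter_succ {M : ℕ} (r : ℕ → Fin M) (t j : ℕ) :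
    counter r (t + 1) j = (if j = (r t : ℕ) then 0 else counter r t j) + 1 := by
  unfold counter
  by_cases hj : j = (r t : ℕ)
  · have hmem : t ∈ (Finset.range (t + 1)).filter fun τ => (r τ : ℕ) = j := by simp [hj]
    have hne : ((Finset.range (t + 1)).filter fun τ => (r τ : ℕ) = j).Nonempty := ⟨t, hmem⟩
    rw [dif_pos hne, if_pos hj]
    have h1 := Finset.le_max' _ t hmem
    have h2 := Finset.max'_mem _ hne
    rw [Finset.mem_filter, Finset.mem_range] at h2
    omega
  · have heq : ((Finset.range (t + 1)).filter fun τ => (r τ : ℕ) = j)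
        = (Finset.range t).filter fun τ => (r τ : ℕ) = j := by
      rw [Finset.range_add_one, Finset.filter_insert, if_neg (fun h => hj h.symm)]
    simp only [heq, if_neg hj]
    split_ifs with h
    · have h2 := Finset.max'_mem _ h
      rw [Finset.mem_filter, Finset.mem_range] at h2
      omega
    · rfl

lemma counter_congr {M : ℕ} (u v : ℕ → Fin M) (t j : ℕ) (h : ∀ s < t, u s = v s) :
    counter u t j = counter v t j := by
  have heq : ((Finset.range t).filter fun τ => (u τ : ℕ) = j)
        = (Finset.range t).filter fun τ => (v τ : ℕ) = j := by
    apply Finset.filter_congr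
    intro s hs
    rw [h s (Finset.mem_range.1 hs)]
  unfold counter
  simp only [heq]

lemma pad_snoc_le {M T : ℕ} (r : Fin (T + 1) → Fin M) (x : Fin M) (s : ℕ) (hs : s ≤ T) :
    pad (Fin.snoc r x : Fin (T + 1 + 1) → Fin M) s = pad r s := by
  unfold pad
  have : (⟨min s (T + 1), Nat.lt_succ_of_le (min_le_right s (T + 1))⟩ : Fin (T + 1 + 1))
      = Fin.castSucc ⟨min s T, Nat.lt_succ_of_le (min_le_right s T)⟩ := by
    ext; simp; omega
  rw [this, Fin.snoc_castSucc (α := fun _ => Fin M)]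

lemma pad_snoc_last {M T : ℕ} (r : Fin (T + 1) → Fin M) (x : Fin M) :
    pad (Fin.snoc r x : Fin (T + 1 + 1) → Fin M) (T + 1) = x := by
  unfold pad
  have : (⟨min (T + 1) (T + 1), Nat.lt_succ_of_le (min_le_right (T + 1) (T + 1))⟩ :
      Fin (T + 1 + 1)) = Fin.last (T + 1) := by
    ext; simp
  rw [this, Fin.snoc_last (α := fun _ => Fin M)]

lemma w0_snoc {M T : ℕ} (pi0 : Fin M → ℝ) (p : Fin M → Fin M → ℝ)
    (r : Fin (T + 1) → Fin M) (x : Fin M) :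
    w0 pi0 p (Fin.snoc r x : Fin (T + 1 + 1) → Fin M) = w0 pi0 p r * p (pad r T) x := by
  unfold w0
  rw [Finset.prod_Icc_succ_top (by omega), pad_snoc_last, Nat.add_sub_cancel,
    pad_snoc_le _ _ _ le_rfl, ← mul_assoc]
  congr 2
  · apply Finset.prod_congr rfl
    intro s hs
    rw [Finset.mem_Icc] at hs
    rw [pad_snoc_le _ _ _ (by omega), pad_snoc_le _ _ _ (by omega)]

lemma sum_step {M T : ℕ} (pi0 : Fin M → ℝ) (p : Fin M → Fin M → ℝ)
    (F : (ℕ → Fin M) → ℝ) (h : Fin M → ℝ)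
    (hF : ∀ u v : ℕ → Fin M, (∀ s ≤ T, u s = v s) → F u = F v) :
    ∑ r : Fin (T + 1 + 1) → Fin M, F (pad r) * h (pad r (T + 1)) * w0 pi0 p r
      = ∑ r : Fin (T + 1) → Fin M, F (pad r) * (∑ x, p (pad r T) x * h x) * w0 pi0 p r := by
  rw [← (Fin.snocEquiv (fun _ : Fin (T + 1 + 1) => Fin M)).sum_comp, Fintype.sum_prod_type_right]
  apply Finset.sum_congr rfl
  intro r _
  rw [Finset.mul_sum, Finset.sum_mul]
  apply Finset.sum_congr rfl
  intro x _
  have e : (Fin.snocEquiv (fun _ : Fin (T + 1 + 1) => Fin M)) (x, r)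
      = (Fin.snoc r x : Fin (T + 1 + 1) → Fin M) := rfl
  rw [e, pad_snoc_last, w0_snoc, hF _ (pad r) (fun s hs => pad_snoc_le r x s hs)]
  ring

lemma sum_marg {M : ℕ} (pi0 : Fin M → ℝ) (p : Fin M → Fin M → ℝ)
    (hprow : ∀ i, ∑ j, p i j = 1) (F : (ℕ → Fin M) → ℝ) (t : ℕ)
    (hF : ∀ u v : ℕ → Fin M, (∀ s ≤ t, u s = v s) → F u = F v) (T : ℕ) (hT : t ≤ T) :
    ∑ r : Fin (T + 1) → Fin M, F (pad r) * w0 pi0 p r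
      = ∑ r : Fin (t + 1) → Fin M, F (pad r) * w0 pi0 p r := by
  induction T, hT using Nat.le_induction with
  | base => rfl
  | succ T hT ih =>
    rw [← ih]
    have := sum_step (T := T) pi0 p F (fun _ => 1)
      (fun u v huv => hF u v (fun s hs => huv s (hs.trans hT)))
    simpa [hprow] using this

end MRS

open MRS in
/-- Transition probabilities of the augmented hidden Markov chain
`H_t = (n_t(r), r_t)` under the path measure `P₀`:
`P₀(H_{t+1} = (n', j), H_t = (n, i)) = p_{ij} · P₀(H_t = (n, i))` if either
`i ∈ S_AR^c` and `n' = n + 1`, or `i ∈ S_AR` and `n' = n^{(−i)} + 1`; and the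
probability is `0` otherwise. -/
theorem augmented_chain_transitions (M k T : ℕ) (hM : 2 ≤ M) (hk : 1 ≤ k) (hkM : k < M)
    (hT : 1 ≤ T)
    (pi0 : Fin M → ℝ) (p : Fin M → Fin M → ℝ)
    (hpi : ∀ i, 0 ≤ pi0 i) (hpisum : ∑ i, pi0 i = 1)
    (hp : ∀ i j, 0 ≤ p i j) (hprow : ∀ i, ∑ j, p i j = 1)
    (t : ℕ) (ht : t < T) (i j : Fin M) (n n' : Fin k → ℕ) :
    (∑ r ∈ Finset.univ.filter (fun r : Fin (T + 1) → Fin M =>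
        (pad r (t + 1) = j ∧ nvec k (pad r) (t + 1) = n') ∧
          (pad r t = i ∧ nvec k (pad r) t = n)), w0 pi0 p r)
      = if (k ≤ (i : ℕ) ∧ n' = fun ℓ : Fin k => n ℓ + 1) ∨
            ((i : ℕ) < k ∧ n' = fun ℓ : Fin k => (if (ℓ : ℕ) = (i : ℕ) then 0 else n ℓ) + 1) then
          p i j *
            ∑ r ∈ Finset.univ.filter (fun r : Fin (T + 1) → Fin M =>
                pad r t = i ∧ nvec k (pad r) t = n), w0 pi0 p r
        else 0 := by
  classical
  have hn : ∀ r : ℕ → Fin M, nvec k r (t + 1)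
      = fun ℓ : Fin k => (if (ℓ : ℕ) = (r t : ℕ) then 0 else nvec k r t ℓ) + 1 := by
    intro r; funext ℓ; exact counter_succ r t ℓ
  have hcond : ((k ≤ (i : ℕ) ∧ n' = fun ℓ : Fin k => n ℓ + 1) ∨
      ((i : ℕ) < k ∧ n' = fun ℓ : Fin k => (if (ℓ : ℕ) = (i : ℕ) then 0 else n ℓ) + 1)) ↔
      n' = fun ℓ : Fin k => (if (ℓ : ℕ) = (i : ℕ) then 0 else n ℓ) + 1 := by
    rcases lt_or_ge (i : ℕ) k with h | h
    · simp [h]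
    · have e : (fun ℓ : Fin k => (if (ℓ : ℕ) = (i : ℕ) then 0 else n ℓ) + 1)
          = fun ℓ : Fin k => n ℓ + 1 := by
        funext ℓ
        rw [if_neg]
        have := ℓ.2
        omega
      rw [e]; simp [h]
  simp only [hcond]
  split_ifs with hc
  · let G : (ℕ → Fin M) → ℝ := fun u => if u t = i ∧ nvec k u t = n then 1 else 0
    have hG : ∀ u v : ℕ → Fin M, (∀ s ≤ t, u s = v s) → G u = G v := by
      intro u v huv
      have e1 : nvec k u t = nvec k v t := by
        funext ℓ; exact counter_congr u v t ℓ (fun s hs => huv s hs.le)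
      simp only [G, e1, huv t le_rfl]
    let h : Fin M → ℝ := fun x => if x = j then 1 else 0
    have hL : (∑ r ∈ Finset.univ.filter (fun r : Fin (T + 1) → Fin M =>
        (pad r (t + 1) = j ∧ nvec k (pad r) (t + 1) = n') ∧
          (pad r t = i ∧ nvec k (pad r) t = n)), w0 pi0 p r)
        = ∑ r : Fin (T + 1) → Fin M, (fun u => G u * h (u (t + 1))) (pad r) * w0 pi0 p r := by
      rw [Finset.sum_filter]
      apply Finset.sum_congr rfl
      intro r _
      by_cases hA : pad r t = i ∧ nvec k (pad r) t = n
      · have hn' : nvec k (pad r) (t + 1) = n' := by rw [hn, hc, hA.1, hA.2]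
        by_cases hB : pad r (t + 1) = j
        · simp [G, h, hA, hB, hn']
        · simp [G, h, hB]
      · rw [if_neg (fun hh => hA hh.2)]
        simp only [G, if_neg hA, zero_mul]
    have hR : (∑ r ∈ Finset.univ.filter (fun r : Fin (T + 1) → Fin M =>
        pad r t = i ∧ nvec k (pad r) t = n), w0 pi0 p r)
        = ∑ r : Fin (T + 1) → Fin M, G (pad r) * w0 pi0 p r := by
      rw [Finset.sum_filter]
      apply Finset.sum_congr rfl
      intro r _
      simp only [G, ite_mul, one_mul, zero_mul]
    rw [hL, hR, sum_marg pi0 p hprow G t hG T ht.le,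
      sum_marg pi0 p hprow (fun u => G u * h (u (t + 1))) (t + 1) ?_ T ht]
    · rw [sum_step pi0 p G h hG, Finset.mul_sum]
      apply Finset.sum_congr rfl
      intro r _
      have e : ∑ x, p (pad r t) x * h x = p (pad r t) j := by simp [h]
      rw [e]
      by_cases hA : pad r t = i ∧ nvec k (pad r) t = n
      · rw [hA.1]; ring
      · simp only [G, if_neg hA, zero_mul, mul_zero]
    · intro u v huv
      simp only [hG u v (fun s hs => huv s (by omega)), huv (t + 1) le_rfl]
  · rw [Finset.filter_false_of_mem, Finset.sum_empty]
    rintro r _ ⟨⟨_, h2⟩, h3, h4⟩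
    apply hc
    rw [← h2, hn, h3, h4]
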